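/- Let φ_R be a reduction function on ideals of R with φ_R(N:_R M) = (φ(N) :_R M). If N is a φ-δ-S-primary submodule of M associated to s ∈ S, then (N :_R M) is a φ_R-δ-S-primary ideal of R associated to s, i.e. (N:_R M) ∩ S = ∅ and whenever ab ∈ (N:_R M) \ φ_R(N:_R M) for a, b ∈ R, then sa ∈ δ(N:_R M) or sb ∈ δ(N:_R M) (in fact sa ∈ (N:_R M) or sb ∈ δ(N:_R M)). -/

import Mathlib

/-!
Disjointness from `S` is inherited from `δ (N : M) ⊇ (N : M)`. For the primary condition, assume
`s * b ∉ δ (N : M)`. Applying primariness of `N` to `b • (a • m)` gives `(s * a) • m ∈ N` for every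
`m` with `(a * b) • m ∉ φ N`. Since `a * b ∉ (φ N : M)`, such an element `m₀` exists. If instead
`(a * b) • m ∈ φ N`, then `m + m₀` is again such an element, and subtracting the memberships for
`m + m₀` and `m₀` gives `(s * a) • m ∈ N`.
-/

open Submodule

variable {R : Type*} [CommRing R] {M : Type*} [AddCommGroup M] [Module R M]

/-- `N` is a `φ`-`δ`-`S`-primary submodule of `M` associated to `s ∈ S`. -/
def IsPhiDeltaSPrimary (δ : Ideal R → Ideal R) (φ : Submodule R M → Submodule R M)
    (S : Set R) (s : R) (N : Submodule R M) : Prop :=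
  N ≠ ⊤ ∧ ((δ (N.colon ⊤) : Set R) ∩ S = ∅) ∧ s ∈ S ∧
    ∀ (a : R) (m : M), a • m ∈ N → a • m ∉ φ N → s • m ∈ N ∨ s * a ∈ δ (N.colon ⊤)

theorem stmt8 (δ : Ideal R → Ideal R) (φ : Submodule R M → Submodule R M)
    (φR : Ideal R → Ideal R)
    (S : Set R) (hS1 : (1 : R) ∈ S) (hSmul : ∀ a ∈ S, ∀ b ∈ S, a * b ∈ S)
    (hδ1 : ∀ I : Ideal R, I ≤ δ I) (hδ2 : ∀ I J : Ideal R, I ≤ J → δ I ≤ δ J)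
    (hφ1 : ∀ P : Submodule R M, φ P ≤ P)
    (hφ2 : ∀ P Q : Submodule R M, P ≤ Q → φ P ≤ φ Q)
    (hφR1 : ∀ I : Ideal R, φR I ≤ I) (hφR2 : ∀ I J : Ideal R, I ≤ J → φR I ≤ φR J)
    (N : Submodule R M) (s : R) (hprim : IsPhiDeltaSPrimary δ φ S s N)
    (hφRN : φR (N.colon ⊤) = (φ N).colon ⊤) :
    ((N.colon ⊤ : Set R) ∩ S = ∅) ∧
      ∀ a b : R, a * b ∈ N.colon ⊤ → a * b ∉ φR (N.colon ⊤) →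
        s * a ∈ N.colon ⊤ ∨ s * b ∈ δ (N.colon ⊤) := by
  obtain ⟨-, hdisj, -, hN⟩ := hprim
  refine ⟨?_, fun a b hab hnab => ?_⟩
  · rw [Set.eq_empty_iff_forall_notMem] at hdisj ⊢
    exact fun x hx => hdisj x ⟨hδ1 _ hx.1, hx.2⟩
  by_cases hsb : s * b ∈ δ (N.colon ⊤)
  · exact Or.inr hsb
  left
  rw [hφRN] at hnab
  simp only [Submodule.mem_colon, Set.top_eq_univ, Set.mem_univ, true_implies] at hab hnab ⊢
  have key : ∀ m : M, (a * b) • m ∉ φ N → (s * a) • m ∈ N := by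
    intro m hm
    have e : (a * b) • m = b • a • m := by rw [mul_comm, mul_smul]
    have h := hN b (a • m) (e ▸ hab m) (e ▸ hm)
    rw [mul_smul]
    exact h.resolve_right hsb
  push Not at hnab
  obtain ⟨m₀, hm₀⟩ := hnab
  intro m
  by_cases hm : (a * b) • m ∈ φ N
  · have h : (s * a) • (m + m₀) ∈ N := by
      refine key _ fun h => hm₀ ?_
      rw [smul_add] at h
      exact ((φ N).add_mem_iff_right hm).1 h
    rw [smul_add] at h
    exact (N.add_mem_iff_left (key m₀ hm₀)).1 h
  · exact key m hm
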